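/- Let g = 10. For b ranging over the integers with 2 ≤ b ≤ 12, the total number of solutions (b, ε₁, ε₂, d₁, d₂, l, m, n) of the equations (b+ε₁)·b^n + ε₂ = d₁·(10^l−1)/9 − d₂·(10^m−1)/9, with ε₁, ε₂ ∈ {1, −1}, integers 1 ≤ d₁, d₂ ≤ 9, l, m ≥ 1 and n ≥ 1, is exactly 160; in all of these solutions m ≤ l ≤ 4 and n ≤ 10. One instance is (2−1)·2^9 − 1 = 5·(10³−1)/9 − 4·(10²−1)/9. -/

import Mathlib

/-- Membership predicate: `(b, ε₁, ε₂, d₁, d₂, l, m, n)` is a solution of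
`(b + ε₁)·b^n + ε₂ = d₁·(10^l−1)/9 − d₂·(10^m−1)/9` with `2 ≤ b ≤ 12`,
`ε₁, ε₂ ∈ {1, −1}`, `1 ≤ d₁, d₂ ≤ 9`, `l, m ≥ 1` and `n ≥ 1`. -/
def DiffSol10 (b ε₁ ε₂ d₁ d₂ : ℤ) (l m n : ℕ) : Prop :=
  2 ≤ b ∧ b ≤ 12 ∧
  (ε₁ = 1 ∨ ε₁ = -1) ∧ (ε₂ = 1 ∨ ε₂ = -1) ∧
  1 ≤ d₁ ∧ d₁ ≤ 9 ∧ 1 ≤ d₂ ∧ d₂ ≤ 9 ∧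
  1 ≤ l ∧ 1 ≤ m ∧ 1 ≤ n ∧
  (b + ε₁) * b ^ n + ε₂ = d₁ * (((10 : ℤ) ^ l - 1) / 9) - d₂ * (((10 : ℤ) ^ m - 1) / 9)

/-- Bounded universal quantifier, evaluated by the kernel. -/
noncomputable def allB (k : ℕ) (f : ℕ → Bool) : Bool :=
  Nat.rec (motive := fun _ => Bool) true (fun n ih => f n && ih) k

theorem allB_spec {f : ℕ → Bool} : ∀ {k : ℕ}, allB k f = true → ∀ n, n < k → f n = true := by
  intro k
  induction k with
  | zero => intro _ n hn; omega
  | succ k ih =>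
    intro h n hn
    have h' : (f k && allB k f) = true := h
    rw [Bool.and_eq_true] at h'
    rcases Nat.lt_succ_iff_lt_or_eq.mp hn with h1 | h1
    · exact ih h'.2 n h1
    · rw [h1]; exact h'.1

/-- Lazy implication of Booleans. -/
def impB (p q : Bool) : Bool := !p || q

theorem impB_spec {p q : Bool} (h : impB p q = true) (hp : p = true) : q = true := by
  subst hp; simpa [impB] using h

/-- Evaluates its first argument before applying the second to it. -/
noncomputable def forceN (x : ℕ) (f : ℕ → Bool) : Bool :=
  Nat.rec (motive := fun _ => Bool) (f 0) (fun k _ => f (k + 1)) x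

theorem forceN_eq (x : ℕ) (f : ℕ → Bool) : forceN x f = f x := by
  cases x <;> rfl

/-- Auxiliary modulus: `11 * 101`, with `7 * 13` added for `b = 8`. -/
def auxMod (b : ℕ) : ℕ := bif Nat.beq b 8 then 101101 else 1111

/-- The equation tested modulo the auxiliary modulus. -/
def eqQ (b X d₁ d₂ l m : ℕ) : Bool :=
  Nat.beq ((X + d₁ + d₂ * 10 ^ m) % auxMod b) ((d₁ * 10 ^ l + d₂ + 9) % auxMod b)

/-- Test for `4 ≤ m ≤ l`; here `X = 9 * A * b ^ n + s`. -/
noncomputable def test1 (b X : ℕ) : Bool :=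
  impB (Nat.ble ((X + 9999) % 10000) 16) <|
    allB 9 fun i => allB 9 fun j =>
      impB (Nat.beq ((X + (i + 1)) % 10000) (((j + 1) + 9) % 10000)) <|
        allB 12 fun l => allB 12 fun m => !(eqQ b X (i + 1) (j + 1) l m)

/-- Test for a fixed `m ≤ 3` and `5 ≤ l`. -/
noncomputable def testFixed (b X m : ℕ) : Bool :=
  impB (Nat.ble 100000 ((X + 99991) % 100000 + 9 * 10 ^ m)) <|
    allB 9 fun j =>
      impB (Nat.ble ((X + (j + 1) * 10 ^ m + (99999 - j)) % 100000) 8) <|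
        allB 9 fun i =>
          impB (Nat.beq ((X + (i + 1) + (j + 1) * 10 ^ m) % 100000) (((j + 1) + 9) % 100000)) <|
            allB 12 fun l => !(eqQ b X (i + 1) (j + 1) l m)

/-- Test for `m ≤ 3`, `5 ≤ l`, both signs; here `X = 9 * A * b ^ n`. -/
noncomputable def test2 (b X : ℕ) : Bool :=
  impB (Nat.ble ((X + 109009) % 100000) 9018) <|
    allB 2 fun e =>
      testFixed b (X + 18 * e) 3 && (testFixed b (X + 18 * e) 2 && testFixed b (X + 18 * e) 1)

noncomputable def sieve1 : Bool :=
  allB 11 fun i => allB 2 fun a => allB 2 fun e => allB 503 fun n =>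
    test1 (i + 2) (9 * (i + 1 + 2 * a) * (i + 2) ^ (n + 1) + 18 * e)

noncomputable def sieve2 : Bool :=
  allB 11 fun i => allB 101 fun h =>
    forceN ((i + 2) ^ (50 * h) % (100000 * auxMod (i + 2))) fun y => allB 50 fun k =>
      allB 2 fun a =>
        forceN (9 * (i + 1 + 2 * a) * (y * (i + 2) ^ (k + 1)) % (100000 * auxMod (i + 2))) fun X =>
          test2 (i + 2) X

/-- Encoding of a solution by a natural number. -/
def enc (b a e d₁ d₂ l m n : ℕ) : ℕ :=
  ((((((b * 10 + a) * 10 + e) * 10 + d₁) * 10 + d₂) * 10 + l) * 10 + m) * 100 + n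

/-- The codes of the solutions. -/
def codes : List ℕ := [
  200142103, 200182102, 200184210, 200211101, 200272104, 200321101, 200322105, 200411102,
  200431101, 200521102, 200541101, 200543209, 200631102, 200632106, 200651101, 200741102,
  200761101, 200811103, 200851102, 200871101, 200921103, 200961102, 200981101, 201122103,
  201162102, 201182101, 201252104, 201411101, 201412205, 201521101, 201522205, 201611102,
  201612106, 201631101, 201632205, 201721102, 201741101, 201742205, 201831102, 201851101,
  201852205, 201941102, 201961101, 201962205, 210162101, 210183203, 210212202, 210322202,
  210432202, 210542202, 210582104, 210611101, 210652202, 210721101, 210762202, 210831101,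
  210872202, 210941101, 210942105, 210982202, 211142101, 211292102, 211382103, 211562104,
  211783108, 211811101, 211921101, 211922105, 300162101, 300252102, 300522103, 300611101,
  300721101, 300831101, 300941101, 301142101, 301232102, 301612203, 301722203, 301811101,
  301832203, 301921101, 301942203, 310143103, 310212201, 310322201, 310432201, 310492102,
  310542201, 310652201, 310762201, 310872201, 310982201, 311123103, 311292101, 311383104,
  311472102, 400212201, 400322201, 400432201, 400542201, 400582102, 400652201, 400762201,
  400872201, 400982201, 401292101, 401562102, 401783104, 410232101, 410892102, 411212101,
  411872102, 500232101, 501212101, 510342101, 511322101, 600342101, 601322101, 610432101,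
  611412101, 700432101, 701412101, 710612201, 710722201, 710832201, 710942201, 711692101,
  800612201, 800722201, 800832201, 800942201, 801692101, 810762101, 811742101, 900762101,
  901742101, 910123201, 911873202, 911982101, 1000123201, 1001982101, 1010123101, 1011213301,
  1011323301, 1011433301, 1011543301, 1011653301, 1011763301, 1011873301, 1011983301, 1100123101,
  1101213301, 1101323301, 1101433301, 1101543301, 1101653301, 1101763301, 1101873301, 1101983301]

noncomputable def finiteCheck : Bool :=
  allB 11 fun i => allB 2 fun a => allB 2 fun e => allB 13 fun n =>
    impB (Nat.ble ((i + 1 + 2 * a) * (i + 2) ^ (n + 1)) 10002) <|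
      allB 4 fun l => allB 3 fun m => allB 9 fun d₁ =>
        impB (Nat.ble (9 * (i + 1 + 2 * a) * (i + 2) ^ (n + 1)) ((d₁ + 1) * 10 ^ (l + 1) + 18)) <|
        impB (Nat.ble ((d₁ + 1) * 10 ^ (l + 1))
          (9 * (i + 1 + 2 * a) * (i + 2) ^ (n + 1) + 9 * 10 ^ (m + 1) + 18)) <|
        allB 9 fun d₂ =>
        impB (Nat.beq ((d₁ + 1) * 10 ^ (l + 1) + (d₂ + 1) + 9)
          (9 * (i + 1 + 2 * a) * (i + 2) ^ (n + 1) + (d₂ + 1) * 10 ^ (m + 1) + (d₁ + 1) + 18 * e))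
          (codes.elem (enc (i + 2) a e (d₁ + 1) (d₂ + 1) (l + 1) (m + 1) (n + 1)))

set_option maxRecDepth 100000 in
theorem sieve1_ok : sieve1 = true := by decide +kernel

set_option maxRecDepth 100000 in
theorem sieve2_ok : sieve2 = true := by decide +kernel

set_option maxRecDepth 100000 in
theorem finiteCheck_ok : finiteCheck = true := by decide +kernel

theorem eqQ_of_modEq {b X Y d₁ d₂ l m l' m' : ℕ} (hX : X ≡ Y [MOD auxMod b])
    (hl : 10 ^ l ≡ 10 ^ l' [MOD auxMod b]) (hm : 10 ^ m ≡ 10 ^ m' [MOD auxMod b])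
    (hE : d₁ * 10 ^ l + d₂ + 9 = X + d₁ + d₂ * 10 ^ m) : eqQ b Y d₁ d₂ l' m' = true := by
  unfold eqQ
  rw [Nat.beq_eq]
  have h1 : X + d₁ + d₂ * 10 ^ m ≡ Y + d₁ + d₂ * 10 ^ m' [MOD auxMod b] :=
    (hX.add_right _).add (hm.mul_left _)
  have h2 : d₁ * 10 ^ l + d₂ + 9 ≡ d₁ * 10 ^ l' + d₂ + 9 [MOD auxMod b] :=
    ((hl.mul_left _).add_right _).add_right _
  exact h1.symm.trans (hE ▸ h2)

theorem auxMod_cases (b : ℕ) : auxMod b = 101101 ∨ auxMod b = 1111 := by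
  unfold auxMod
  cases Nat.beq b 8 <;> simp

theorem ten_pow_mod (b l : ℕ) : 10 ^ l ≡ 10 ^ (l % 12) [MOD auxMod b] := by
  have h : 10 ^ 12 ≡ 1 [MOD auxMod b] := by
    rcases auxMod_cases b with h | h <;> rw [h] <;> decide
  have h2 : 10 ^ l = (10 ^ 12) ^ (l / 12) * 10 ^ (l % 12) := by
    rw [← pow_mul, ← pow_add, Nat.div_add_mod]
  calc 10 ^ l = (10 ^ 12) ^ (l / 12) * 10 ^ (l % 12) := h2
    _ ≡ 1 ^ (l / 12) * 10 ^ (l % 12) [MOD auxMod b] := (h.pow _).mul_right _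
    _ = 10 ^ (l % 12) := by simp

theorem test1_false {b X d₁ d₂ l m : ℕ} (h1 : 1 ≤ d₁) (h1' : d₁ ≤ 9) (h2 : 1 ≤ d₂) (h2' : d₂ ≤ 9)
    (hl : l < 12) (hm : m < 12) (ht : test1 b X = true)
    (h4 : (X + d₁) % 10000 = (d₂ + 9) % 10000) (hQ : eqQ b X d₁ d₂ l m = true) : False := by
  obtain ⟨i, rfl⟩ : ∃ i, d₁ = i + 1 := ⟨d₁ - 1, by omega⟩
  obtain ⟨j, rfl⟩ : ∃ j, d₂ = j + 1 := ⟨d₂ - 1, by omega⟩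
  unfold test1 at ht
  have t1 := impB_spec ht (by rw [Nat.ble_eq]; omega)
  have t2 := allB_spec (allB_spec t1 i (by omega)) j (by omega)
  have t3 := impB_spec t2 (by rw [Nat.beq_eq]; exact h4)
  have t4 := allB_spec (allB_spec t3 l hl) m hm
  rw [hQ] at t4
  simp at t4

theorem testFixed_false {b X d₁ d₂ l m : ℕ} (h1 : 1 ≤ d₁) (h1' : d₁ ≤ 9) (h2 : 1 ≤ d₂)
    (h2' : d₂ ≤ 9) (hl : l < 12) (hm : m = 1 ∨ m = 2 ∨ m = 3) (ht : testFixed b X m = true)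
    (h4 : (X + d₁ + d₂ * 10 ^ m) % 100000 = (d₂ + 9) % 100000)
    (hQ : eqQ b X d₁ d₂ l m = true) : False := by
  obtain ⟨i, rfl⟩ : ∃ i, d₁ = i + 1 := ⟨d₁ - 1, by omega⟩
  obtain ⟨j, rfl⟩ : ∃ j, d₂ = j + 1 := ⟨d₂ - 1, by omega⟩
  have hmod : (j + 1 + 9) % 100000 = j + 1 + 9 := Nat.mod_eq_of_lt (by omega)
  have hj : j ≤ 8 := by omega
  unfold testFixed at ht
  have t1 := impB_spec ht (by
    rw [Nat.ble_eq]
    rw [hmod] at h4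
    rcases hm with rfl | rfl | rfl <;> norm_num at h4 ⊢ <;> clear ht <;>
      interval_cases j <;> omega)
  have t2 := allB_spec t1 j (by omega)
  have t3 := impB_spec t2 (by
    rw [Nat.ble_eq]
    rw [hmod] at h4
    rcases hm with rfl | rfl | rfl <;> norm_num at h4 ⊢ <;> clear ht <;>
      interval_cases j <;> omega)
  have t4 := impB_spec (allB_spec t3 i (by omega)) (by rw [Nat.beq_eq]; exact h4)
  have t5 := allB_spec t4 l hl
  rw [hQ] at t5
  simp at t5

theorem test2_false {b X d₁ d₂ l m e : ℕ} (h1 : 1 ≤ d₁) (h1' : d₁ ≤ 9) (h2 : 1 ≤ d₂)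
    (h2' : d₂ ≤ 9) (hl : l < 12) (hm : m = 1 ∨ m = 2 ∨ m = 3) (he : e < 2)
    (ht : test2 b X = true)
    (h4 : (X + 18 * e + d₁ + d₂ * 10 ^ m) % 100000 = (d₂ + 9) % 100000)
    (hQ : eqQ b (X + 18 * e) d₁ d₂ l m = true) : False := by
  have hmod : (d₂ + 9) % 100000 = d₂ + 9 := Nat.mod_eq_of_lt (by omega)
  unfold test2 at ht
  have t1 := impB_spec ht (by
    rw [Nat.ble_eq]
    rw [hmod] at h4
    rcases hm with rfl | rfl | rfl <;> norm_num at h4 ⊢ <;> clear ht hQ <;>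
      interval_cases d₂ <;> interval_cases e <;> omega)
  have t2 := allB_spec t1 e he
  rw [Bool.and_eq_true, Bool.and_eq_true] at t2
  rcases hm with rfl | rfl | rfl
  · exact testFixed_false h1 h1' h2 h2' hl (by simp) t2.2.2 h4 hQ
  · exact testFixed_false h1 h1' h2 h2' hl (by simp) t2.2.1 h4 hQ
  · exact testFixed_false h1 h1' h2 h2' hl (by simp) t2.1 h4 hQ

theorem pow_periodic {b k p M : ℕ} (hk : 1 ≤ k) (hp : 1 ≤ p) (h : b ^ (k + p) ≡ b ^ k [MOD M])
    (n : ℕ) (hn : 1 ≤ n) : ∃ n', n' + 1 < k + p ∧ b ^ n ≡ b ^ (n' + 1) [MOD M] := by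
  induction n using Nat.strong_induction_on with
  | _ n ih =>
    by_cases hlt : n < k + p
    · exact ⟨n - 1, by omega, by rw [Nat.sub_add_cancel hn]⟩
    · obtain ⟨n', h1, h2⟩ := ih (n - p) (by omega) (by omega)
      refine ⟨n', h1, Nat.ModEq.trans ?_ h2⟩
      have e1 : b ^ n = b ^ (n - (k + p)) * b ^ (k + p) := by
        rw [← pow_add]; congr 1; omega
      have e2 : b ^ (n - p) = b ^ (n - (k + p)) * b ^ k := by
        rw [← pow_add]; congr 1; omega
      rw [e1, e2]
      exact h.mul_left _

theorem period1 : ∀ i < 11, (i + 2) ^ (4 + 500) % (10000 * auxMod (i + 2))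
    = (i + 2) ^ 4 % (10000 * auxMod (i + 2)) := by decide +kernel

theorem period2 : ∀ i < 11, (i + 2) ^ (5 + 5000) % (100000 * auxMod (i + 2))
    = (i + 2) ^ 5 % (100000 * auxMod (i + 2)) := by decide +kernel

/-- No solutions with `4 ≤ m ≤ l`. -/
theorem no_large_m {i a e d₁ d₂ l m n : ℕ} (hi : i < 11) (ha : a < 2) (he : e < 2)
    (h1 : 1 ≤ d₁) (h1' : d₁ ≤ 9) (h2 : 1 ≤ d₂) (h2' : d₂ ≤ 9) (hn : 1 ≤ n)
    (hm : 4 ≤ m) (hl : 4 ≤ l)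
    (hE : d₁ * 10 ^ l + d₂ + 9
      = (9 * (i + 1 + 2 * a) * (i + 2) ^ n + 18 * e) + d₁ + d₂ * 10 ^ m) : False := by
  obtain ⟨k, hk, hmod⟩ := pow_periodic (by norm_num) (by norm_num) (period1 i hi) n hn
  have hX : 9 * (i + 1 + 2 * a) * (i + 2) ^ n + 18 * e
      ≡ 9 * (i + 1 + 2 * a) * (i + 2) ^ (k + 1) + 18 * e [MOD 10000 * auxMod (i + 2)] :=
    (hmod.mul_left _).add_right _
  have ht := allB_spec (allB_spec (allB_spec (allB_spec sieve1_ok i hi) a ha) e he) k (by omega)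
  have hQ := eqQ_of_modEq (hX.of_mul_left _) (ten_pow_mod (i + 2) l) (ten_pow_mod (i + 2) m) hE
  have hX' := hX.of_mul_right (auxMod (i + 2))
  generalize 9 * (i + 1 + 2 * a) * (i + 2) ^ n + 18 * e = X at *
  generalize 9 * (i + 1 + 2 * a) * (i + 2) ^ (k + 1) + 18 * e = Y at *
  refine test1_false h1 h1' h2 h2' (Nat.mod_lt _ (by norm_num)) (Nat.mod_lt _ (by norm_num))
    ht ?_ hQ
  obtain ⟨u, rfl⟩ := Nat.exists_eq_add_of_le hm
  obtain ⟨v, rfl⟩ := Nat.exists_eq_add_of_le hl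
  have e1 : d₁ * 10 ^ (4 + v) = 10000 * (d₁ * 10 ^ v) := by rw [pow_add]; ring
  have e2 : d₂ * 10 ^ (4 + u) = 10000 * (d₂ * 10 ^ u) := by rw [pow_add]; ring
  rw [e1, e2] at hE
  unfold Nat.ModEq at hX'
  omega

/-- No solutions with `m ≤ 3` and `5 ≤ l`. -/
theorem no_large_l {i a e d₁ d₂ l m n : ℕ} (hi : i < 11) (ha : a < 2) (he : e < 2)
    (h1 : 1 ≤ d₁) (h1' : d₁ ≤ 9) (h2 : 1 ≤ d₂) (h2' : d₂ ≤ 9) (hn : 1 ≤ n)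
    (hm : m = 1 ∨ m = 2 ∨ m = 3) (hl : 5 ≤ l)
    (hE : d₁ * 10 ^ l + d₂ + 9
      = (9 * (i + 1 + 2 * a) * (i + 2) ^ n + 18 * e) + d₁ + d₂ * 10 ^ m) : False := by
  obtain ⟨k, hk, hmod⟩ := pow_periodic (by norm_num) (by norm_num) (period2 i hi) n hn
  have ht := allB_spec (allB_spec sieve2_ok i hi) (k / 50) (by omega)
  rw [forceN_eq] at ht
  have ht2 := allB_spec (allB_spec ht (k % 50) (by omega)) a ha
  rw [forceN_eq] at ht2
  have hX0 : 9 * (i + 1 + 2 * a) * (i + 2) ^ n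
      ≡ 9 * (i + 1 + 2 * a) * ((i + 2) ^ (50 * (k / 50)) % (100000 * auxMod (i + 2))
        * (i + 2) ^ (k % 50 + 1)) % (100000 * auxMod (i + 2)) [MOD 100000 * auxMod (i + 2)] := by
    refine Nat.ModEq.trans ?_ (Nat.mod_modEq _ _).symm
    refine Nat.ModEq.mul_left _ (hmod.trans ?_)
    have e1 : (i + 2) ^ (k + 1) = (i + 2) ^ (50 * (k / 50)) * (i + 2) ^ (k % 50 + 1) := by
      have hk' : 50 * (k / 50) + (k % 50 + 1) = k + 1 := by omega
      rw [← pow_add, hk']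
    rw [e1]
    exact (Nat.mod_modEq _ _).symm.mul_right _
  have hX := hX0.add_right (18 * e)
  have hm12 : m % 12 = m := by omega
  have hm' := ten_pow_mod (i + 2) m
  rw [hm12] at hm'
  have hQ := eqQ_of_modEq (hX.of_mul_left _) (ten_pow_mod (i + 2) l) hm' hE
  have hX' := hX.of_mul_right (auxMod (i + 2))
  refine test2_false h1 h1' h2 h2' (Nat.mod_lt _ (by norm_num)) hm he ht2 ?_ hQ
  clear ht ht2 hQ hX hX0 hmod
  generalize 9 * (i + 1 + 2 * a) * ((i + 2) ^ (50 * (k / 50)) % (100000 * auxMod (i + 2))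
        * (i + 2) ^ (k % 50 + 1)) % (100000 * auxMod (i + 2)) + 18 * e = Y at *
  generalize 9 * (i + 1 + 2 * a) * (i + 2) ^ n + 18 * e = X at *
  obtain ⟨v, rfl⟩ := Nat.exists_eq_add_of_le hl
  have e1 : d₁ * 10 ^ (5 + v) = 100000 * (d₁ * 10 ^ v) := by rw [pow_add]; ring
  rw [e1] at hE
  unfold Nat.ModEq at hX'
  omega

theorem codes_n : ∀ c ∈ codes, c % 100 ≤ 10 := by decide +kernel

/-- All solutions, in terms of natural numbers. -/
theorem key {i a e d₁ d₂ l m n : ℕ} (hi : i < 11) (ha : a < 2) (he : e < 2)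
    (h1 : 1 ≤ d₁) (h1' : d₁ ≤ 9) (h2 : 1 ≤ d₂) (h2' : d₂ ≤ 9) (hn : 1 ≤ n)
    (hl : 1 ≤ l) (hm : 1 ≤ m)
    (hE : d₁ * 10 ^ l + d₂ + 9
      = (9 * (i + 1 + 2 * a) * (i + 2) ^ n + 18 * e) + d₁ + d₂ * 10 ^ m) :
    m ≤ l ∧ l ≤ 4 ∧ m ≤ 3 ∧ n ≤ 10 ∧ enc (i + 2) a e d₁ d₂ l m n ∈ codes := by
  have hA : 2 ^ n ≤ (i + 1 + 2 * a) * (i + 2) ^ n :=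
    calc 2 ^ n ≤ (i + 2) ^ n := Nat.pow_le_pow_left (by omega) n
      _ ≤ _ := Nat.le_mul_of_pos_left _ (by omega)
  have hpow : 2 ≤ 2 ^ n := by
    calc 2 = 2 ^ 1 := rfl
      _ ≤ 2 ^ n := Nat.pow_le_pow_right (by norm_num) hn
  have hml : m ≤ l := by
    by_contra hlt
    obtain ⟨u, rfl⟩ : ∃ u, m = l + 1 + u := ⟨m - l - 1, by omega⟩
    have e1 : 10 * 10 ^ l ≤ 10 ^ (l + 1 + u) := by
      rw [← pow_succ']; exact Nat.pow_le_pow_right (by norm_num) (by omega)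
    have e2 : d₁ * 10 ^ l ≤ 9 * 10 ^ l := Nat.mul_le_mul_right _ h1'
    have e3 : 1 * 10 ^ (l + 1 + u) ≤ d₂ * 10 ^ (l + 1 + u) := Nat.mul_le_mul_right _ h2
    have e4 : 10 ^ 1 ≤ 10 ^ l := Nat.pow_le_pow_right (by norm_num) hl
    rw [mul_assoc] at hE
    omega
  have hm3 : m ≤ 3 := by
    by_contra hlt
    exact no_large_m hi ha he h1 h1' h2 h2' hn (by omega) (by omega) hE
  have hl4 : l ≤ 4 := by
    by_contra hlt
    exact no_large_l hi ha he h1 h1' h2 h2' hn (by omega) (by omega) hE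
  have hb : (i + 1 + 2 * a) * (i + 2) ^ n ≤ 10002 := by
    have e2 : d₁ * 10 ^ l ≤ 9 * 10 ^ 4 :=
      Nat.mul_le_mul h1' (Nat.pow_le_pow_right (by norm_num) hl4)
    rw [mul_assoc] at hE
    omega
  have hn13 : n ≤ 13 := by
    by_contra hlt
    have : 2 ^ 14 ≤ 2 ^ n := Nat.pow_le_pow_right (by norm_num) (by omega)
    omega
  have hmem : enc (i + 2) a e d₁ d₂ l m n ∈ codes := by
    obtain ⟨d₁, rfl⟩ : ∃ d, d₁ = d + 1 := ⟨d₁ - 1, by omega⟩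
    obtain ⟨d₂, rfl⟩ : ∃ d, d₂ = d + 1 := ⟨d₂ - 1, by omega⟩
    obtain ⟨l, rfl⟩ : ∃ d, l = d + 1 := ⟨l - 1, by omega⟩
    obtain ⟨m, rfl⟩ : ∃ d, m = d + 1 := ⟨m - 1, by omega⟩
    obtain ⟨n, rfl⟩ : ∃ d, n = d + 1 := ⟨n - 1, by omega⟩
    have t := allB_spec (allB_spec (allB_spec (allB_spec finiteCheck_ok i hi) a ha) e he) n
      (by omega)
    have t1 := impB_spec t (by rw [Nat.ble_eq]; exact hb)
    have t2 := allB_spec (allB_spec (allB_spec t1 l (by omega)) m (by omega)) d₁ (by omega)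
    have e3 : 1 * 10 ^ (m + 1) ≤ (d₂ + 1) * 10 ^ (m + 1) := Nat.mul_le_mul_right _ h2
    have e4 : (d₂ + 1) * 10 ^ (m + 1) ≤ 9 * 10 ^ (m + 1) := Nat.mul_le_mul_right _ h2'
    have t3 := impB_spec t2 (by rw [Nat.ble_eq]; omega)
    have t4 := impB_spec t3 (by rw [Nat.ble_eq]; omega)
    have t5 := impB_spec (allB_spec t4 d₂ (by omega)) (by rw [Nat.beq_eq]; omega)
    exact List.elem_iff.mp t5
  refine ⟨hml, hl4, hm3, ?_, hmem⟩
  have := codes_n _ hmem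
  unfold enc at this
  omega

/-- Decoding of a natural number to a tuple. -/
def dec (c : ℕ) : ℤ × ℤ × ℤ × ℤ × ℤ × ℕ × ℕ × ℕ :=
  (((c / 100000000 : ℕ) : ℤ), 2 * ((c / 10000000 % 10 : ℕ) : ℤ) - 1,
    2 * ((c / 1000000 % 10 : ℕ) : ℤ) - 1, ((c / 100000 % 10 : ℕ) : ℤ), ((c / 10000 % 10 : ℕ) : ℤ),
    c / 1000 % 10, c / 100 % 10, c % 100)

theorem dec_enc {b a e d₁ d₂ l m n : ℕ} (ha : a < 10) (he : e < 10) (h1 : d₁ < 10) (h2 : d₂ < 10)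
    (hl : l < 10) (hm : m < 10) (hn : n < 100) :
    dec (enc b a e d₁ d₂ l m n)
      = ((b : ℤ), 2 * (a : ℤ) - 1, 2 * (e : ℤ) - 1, (d₁ : ℤ), (d₂ : ℤ), l, m, n) := by
  unfold dec enc
  have e1 : (((((((b * 10 + a) * 10 + e) * 10 + d₁) * 10 + d₂) * 10 + l) * 10 + m) * 100 + n)
      / 100000000 = b := by omega
  have e2 : (((((((b * 10 + a) * 10 + e) * 10 + d₁) * 10 + d₂) * 10 + l) * 10 + m) * 100 + n)
      / 10000000 % 10 = a := by omega
  have e3 : (((((((b * 10 + a) * 10 + e) * 10 + d₁) * 10 + d₂) * 10 + l) * 10 + m) * 100 + n)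
      / 1000000 % 10 = e := by omega
  have e4 : (((((((b * 10 + a) * 10 + e) * 10 + d₁) * 10 + d₂) * 10 + l) * 10 + m) * 100 + n)
      / 100000 % 10 = d₁ := by omega
  have e5 : (((((((b * 10 + a) * 10 + e) * 10 + d₁) * 10 + d₂) * 10 + l) * 10 + m) * 100 + n)
      / 10000 % 10 = d₂ := by omega
  have e6 : (((((((b * 10 + a) * 10 + e) * 10 + d₁) * 10 + d₂) * 10 + l) * 10 + m) * 100 + n)
      / 1000 % 10 = l := by omega
  have e7 : (((((((b * 10 + a) * 10 + e) * 10 + d₁) * 10 + d₂) * 10 + l) * 10 + m) * 100 + n)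
      / 100 % 10 = m := by omega
  have e8 : (((((((b * 10 + a) * 10 + e) * 10 + d₁) * 10 + d₂) * 10 + l) * 10 + m) * 100 + n)
      % 100 = n := by omega
  rw [e1, e2, e3, e4, e5, e6, e7, e8]

theorem nine_repunit (l : ℕ) : 9 * (((10 : ℤ) ^ l - 1) / 9) = (10 : ℤ) ^ l - 1 := by
  apply Int.mul_ediv_cancel'
  have := sub_dvd_pow_sub_pow (10 : ℤ) 1 l
  norm_num at this
  exact this

/-- Reduction of a solution to natural numbers. -/
theorem sol_key {b ε₁ ε₂ d₁ d₂ : ℤ} {l m n : ℕ} (h : DiffSol10 b ε₁ ε₂ d₁ d₂ l m n) :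
    (m ≤ l ∧ l ≤ 4 ∧ n ≤ 10) ∧ (b, ε₁, ε₂, d₁, d₂, l, m, n) ∈ codes.map dec := by
  obtain ⟨hb, hb', he1, he2, h1, h1', h2, h2', hl, hm, hn, hE⟩ := h
  obtain ⟨i, rfl⟩ : ∃ i : ℕ, b = i + 2 := ⟨(b - 2).toNat, by omega⟩
  obtain ⟨a, ha, rfl⟩ : ∃ a : ℕ, a < 2 ∧ ε₁ = 2 * (a : ℤ) - 1 := by
    rcases he1 with rfl | rfl
    · exact ⟨1, by norm_num, by norm_num⟩
    · exact ⟨0, by norm_num, by norm_num⟩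
  obtain ⟨e, he, rfl⟩ : ∃ a : ℕ, a < 2 ∧ ε₂ = 2 * (a : ℤ) - 1 := by
    rcases he2 with rfl | rfl
    · exact ⟨1, by norm_num, by norm_num⟩
    · exact ⟨0, by norm_num, by norm_num⟩
  lift d₁ to ℕ using by omega
  lift d₂ to ℕ using by omega
  have hE' : d₁ * 10 ^ l + d₂ + 9
      = (9 * (i + 1 + 2 * a) * (i + 2) ^ n + 18 * e) + d₁ + d₂ * 10 ^ m := by
    zify
    have r1 := nine_repunit l
    have r2 := nine_repunit m
    linear_combination (-9) * hE - (d₁ : ℤ) * r1 + (d₂ : ℤ) * r2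
  obtain ⟨k1, k2, k3, k4, k5⟩ := key (i := i) (by omega) ha he (by omega) (by omega) (by omega)
    (by omega) hn hl hm hE'
  refine ⟨⟨k1, k2, k4⟩, List.mem_map.mpr ⟨_, k5, ?_⟩⟩
  rw [dec_enc (by omega) (by omega) (by omega) (by omega) (by omega) (by omega) (by omega)]
  push_cast
  rfl

instance (b ε₁ ε₂ d₁ d₂ : ℤ) (l m n : ℕ) : Decidable (DiffSol10 b ε₁ ε₂ d₁ d₂ l m n) := by
  unfold DiffSol10; infer_instance

theorem codes_sol : ∀ c ∈ codes, DiffSol10 (dec c).1 (dec c).2.1 (dec c).2.2.1 (dec c).2.2.2.1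
    (dec c).2.2.2.2.1 (dec c).2.2.2.2.2.1 (dec c).2.2.2.2.2.2.1 (dec c).2.2.2.2.2.2.2 := by
  decide +kernel

instance : DecidableEq (ℤ × ℕ × ℕ × ℕ) := inferInstance
instance : DecidableEq (ℤ × ℤ × ℤ × ℕ × ℕ × ℕ) := instDecidableEqProd
instance : DecidableEq (ℤ × ℤ × ℤ × ℤ × ℤ × ℕ × ℕ × ℕ) := instDecidableEqProd

theorem codes_card : (codes.map dec).toFinset.card = 160 := by decide +kernel

/-- For `g = 10` and `2 ≤ b ≤ 12`: the equations
`(b ± 1)·b^n ± 1 = d₁·(10^l−1)/9 − d₂·(10^m−1)/9` have exactly `160` solutions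
with `n ≥ 1`; in all of them `m ≤ l ≤ 4` and `n ≤ 10`. One instance is
`(2−1)·2^9 − 1 = 5·(10³−1)/9 − 4·(10²−1)/9`. -/
theorem stmt_19 :
    {x : ℤ × ℤ × ℤ × ℤ × ℤ × ℕ × ℕ × ℕ |
        DiffSol10 x.1 x.2.1 x.2.2.1 x.2.2.2.1 x.2.2.2.2.1
          x.2.2.2.2.2.1 x.2.2.2.2.2.2.1 x.2.2.2.2.2.2.2}.ncard = 160 ∧
    (∀ (b ε₁ ε₂ d₁ d₂ : ℤ) (l m n : ℕ),
      DiffSol10 b ε₁ ε₂ d₁ d₂ l m n → m ≤ l ∧ l ≤ 4 ∧ n ≤ 10) ∧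
    ((2 : ℤ) - 1) * 2 ^ 9 - 1 =
      5 * (((10 : ℤ) ^ 3 - 1) / 9) - 4 * (((10 : ℤ) ^ 2 - 1) / 9) := by
  refine ⟨?_, fun b ε₁ ε₂ d₁ d₂ l m n h => (sol_key h).1, by norm_num⟩
  rw [← codes_card, ← Set.ncard_coe_finset]
  congr 1
  ext ⟨b, ε₁, ε₂, d₁, d₂, l, m, n⟩
  simp only [Set.mem_ofPred_eq, Finset.mem_coe, List.mem_toFinset]
  constructor
  · intro h
    exact (sol_key h).2
  · intro h
    obtain ⟨c, hc, hd⟩ := List.mem_map.mp h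
    have := codes_sol c hc
    rw [hd] at this
    exact this
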